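/- Let R be a unital ring and G_1,...,G_d finite groups with each |G_i| invertible in R. Then there is a ring isomorphism J_{G_1,...,G_d}(R) ≅ M_d(R) × Π_{i=1}^d Δ_R(G_i), where Δ_R(G_i) is the augmentation ideal of R[G_i] viewed as a (non-unital summand) ring, namely R[G_i](1 − e_{G_i}). Consequently, if R is semisimple then J_{G_1,...,G_d}(R) is semisimple. -/

import Mathlib

open MonoidAlgebra

/-- A block matrix is a join of `G i`-circulant matrices if each diagonal block
is `G i`-circulant and each off-diagonal block is constant. -/
def IsJoin {d : ℕ} {G : Fin d → Type*} [∀ i, Group (G i)] {R : Type*}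
    (A : Matrix ((i : Fin d) × G i) ((i : Fin d) × G i) R) : Prop :=
  (∀ (i : Fin d) (g x y : G i), A ⟨i, g * x⟩ ⟨i, g * y⟩ = A ⟨i, x⟩ ⟨i, y⟩) ∧
  (∀ (i j : Fin d), i ≠ j → ∀ (x x' : G i) (y y' : G j),
    A ⟨i, x⟩ ⟨j, y⟩ = A ⟨i, x'⟩ ⟨j, y'⟩)

/-- The augmentation homomorphism `R[G] → R`, sending `Σ a_g g` to `Σ a_g`. -/
noncomputable def aug (R : Type*) [Ring R] (G : Type*) [Group G] :
    MonoidAlgebra R G →+* R :=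
  liftNCRingHom (RingHom.id R) (1 : G →* R) (fun _ _ => by simp [Commute.one_right])

lemma aug_single {R : Type*} [Ring R] {G : Type*} [Group G] (g : G) (c : R) :
    aug R G (MonoidAlgebra.single g c) = c := by
  simp [aug, liftNCRingHom, MonoidAlgebra.liftNC_single]

/-- `M_d(R) × Π_i Δ_R(G_i)`, realized as a non-unital subring of
`M_d(R) × Π_i R[G_i]`: the set of pairs whose second components all lie in the
augmentation ideal. Its multiplicative identity is `(1, (1 - e_{G_i})_i)`. -/
noncomputable def targetΔ {d : ℕ} (G : Fin d → Type*) [∀ i, Group (G i)]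
    (R : Type*) [Ring R] :
    NonUnitalSubring (Matrix (Fin d) (Fin d) R × ((i : Fin d) → MonoidAlgebra R (G i))) where
  carrier := {p | ∀ i, aug R (G i) (p.2 i) = 0}
  add_mem' := by intro a b ha hb i; simp [map_add, ha i, hb i]
  zero_mem' := by intro i; simp
  neg_mem' := by intro a ha i; simp [ha i]
  mul_mem' := by intro a b ha hb i; simp [map_mul, ha i]

/-- The idempotent `e_G = (1/|G|) Σ_{g ∈ G} g`. -/
noncomputable def eGrp (R : Type*) [Ring R] (G : Type*) [Group G] [Fintype G]
    [Invertible (Fintype.card G : R)] : MonoidAlgebra R G :=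
  ∑ g : G, MonoidAlgebra.single g (⅟(Fintype.card G : R))

lemma one_sub_eGrp_mem {d : ℕ} (G : Fin d → Type*) [∀ i, Group (G i)]
    [∀ i, Fintype (G i)] (R : Type*) [Ring R]
    [∀ i, Invertible (Fintype.card (G i) : R)] :
    (⟨1, fun i => (1 : MonoidAlgebra R (G i)) - eGrp R (G i)⟩ :
      Matrix (Fin d) (Fin d) R × ((i : Fin d) → MonoidAlgebra R (G i)))
      ∈ targetΔ G R := by
  intro i
  have h1 : aug R (G i) (eGrp R (G i)) = 1 := by
    simp only [eGrp, map_sum, aug_single, Finset.sum_const, Finset.card_univ,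
      nsmul_eq_mul]
    exact mul_invOf_self _
  simp [map_sub, h1]

section JoinHelpers

set_option linter.unusedSectionVars false

lemma c_comm {R : Type*} [Ring R] (n : ℕ) [Invertible (n : R)] (r : R) :
    ⅟(n : R) * r = r * ⅟(n : R) :=
  ((Nat.cast_commute n r).invOf_left).eq

lemma aug_eq_sum {R : Type*} [Ring R] {G : Type*} [Group G] [Fintype G] (x : MonoidAlgebra R G) :
    aug R G x = ∑ g, x.coeff g := by
  classical
  induction x using MonoidAlgebra.induction_linear with
  | zero => simp
  | add f g hf hg => simp [hf, hg, Finset.sum_add_distrib]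
  | single g r => simp [aug_single, Finsupp.single_apply]

lemma coeff_mul_sum {R : Type*} [Ring R] {G : Type*} [Group G] [Fintype G]
    (x y : MonoidAlgebra R G) (g : G) :
    (x * y).coeff g = ∑ h, x.coeff h * y.coeff (h⁻¹ * g) := by
  rw [MonoidAlgebra.coeff_mul_apply_left, Finsupp.sum_fintype]
  simp

lemma coeff_eGrp {R : Type*} [Ring R] {G : Type*} [Group G] [Fintype G]
    [Invertible (Fintype.card G : R)] (g : G) :
    (eGrp R G).coeff g = ⅟(Fintype.card G : R) := by
  classical
  simp [eGrp, Finsupp.single_apply, Finsupp.finsetSum_apply]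

lemma coeff_mul_eGrp {R : Type*} [Ring R] {G : Type*} [Group G] [Fintype G]
    [Invertible (Fintype.card G : R)] (x : MonoidAlgebra R G) (g : G) :
    (x * eGrp R G).coeff g = aug R G x * ⅟(Fintype.card G : R) := by
  simp [coeff_mul_sum, coeff_eGrp, aug_eq_sum, Finset.sum_mul]

lemma sum_inv_mul {R : Type*} [Ring R] {G : Type*} [Group G] [Fintype G] (f : G → R) (g : G) :
    ∑ h, f (h⁻¹ * g) = ∑ h, f h :=
  Fintype.sum_equiv ((Equiv.inv G).trans (Equiv.mulRight g)) _ _ (fun _ => rfl)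

lemma eGrp_mul_comm {R : Type*} [Ring R] {G : Type*} [Group G] [Fintype G]
    [Invertible (Fintype.card G : R)] (x : MonoidAlgebra R G) :
    eGrp R G * x = x * eGrp R G := by
  ext g
  rw [coeff_mul_eGrp, coeff_mul_sum]
  simp only [coeff_eGrp]
  rw [← Finset.mul_sum, sum_inv_mul (fun h => x.coeff h), ← aug_eq_sum, c_comm]

lemma mul_eGrp_of_aug {R : Type*} [Ring R] {G : Type*} [Group G] [Fintype G]
    [Invertible (Fintype.card G : R)] (x : MonoidAlgebra R G) (hx : aug R G x = 0) :
    x * eGrp R G = 0 := by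
  ext g
  simp [coeff_mul_eGrp, hx]

lemma aug_eGrp {R : Type*} [Ring R] {G : Type*} [Group G] [Fintype G]
    [Invertible (Fintype.card G : R)] : aug R G (eGrp R G) = 1 := by
  simp [aug_eq_sum, coeff_eGrp]

lemma eGrp_idem {R : Type*} [Ring R] {G : Type*} [Group G] [Fintype G]
    [Invertible (Fintype.card G : R)] : eGrp R G * eGrp R G = eGrp R G := by
  ext g
  simp [coeff_mul_eGrp, aug_eGrp, coeff_eGrp]

/-- Maschke's theorem over an arbitrary semisimple ring. -/
theorem maschke {R : Type*} [Ring R] {G : Type*} [Group G] [Fintype G]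
    [Invertible (Fintype.card G : R)] [IsSemisimpleRing R] :
    IsSemisimpleRing (MonoidAlgebra R G) := by
  have key : ∀ I : Submodule (MonoidAlgebra R G) (MonoidAlgebra R G), ∃ J, IsCompl I J := by
    intro I
    have hsm : ∀ (r : R) (x : MonoidAlgebra R G), r • x = MonoidAlgebra.single 1 r * x := by
      intro r x
      ext g
      simp
    let I' : Submodule R (MonoidAlgebra R G) :=
      { carrier := I
        add_mem' := fun ha hb => I.add_mem ha hb
        zero_mem' := I.zero_mem
        smul_mem' := fun r x hx => by
          rw [hsm]; exact I.smul_mem _ hx }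
    obtain ⟨J', hJ'⟩ := exists_isCompl I'
    let π : MonoidAlgebra R G →ₗ[R] I' := I'.projectionOnto J' hJ'
    have hπ : ∀ x ∈ I, ((π x : I') : MonoidAlgebra R G) = x := fun x hx => by
      have := Submodule.projectionOnto_apply_left hJ' ⟨x, hx⟩
      exact congrArg Subtype.val this
    have hmem : ∀ x, ((π x : I') : MonoidAlgebra R G) ∈ I := fun x => (π x).2
    let c : R := ⅟(Fintype.card G : R)
    let P : MonoidAlgebra R G → MonoidAlgebra R G := fun v =>
      ∑ g : G, MonoidAlgebra.single g⁻¹ c * (π (MonoidAlgebra.single g 1 * v) : MonoidAlgebra R G)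
    have hPadd : ∀ u v, P (u + v) = P u + P v := by
      intro u v
      simp only [P, mul_add, map_add, Submodule.coe_add, Finset.sum_add_distrib]
    have hPmem : ∀ v, P v ∈ I := fun v =>
      I.sum_mem fun g _ => I.smul_mem _ (hmem _)
    have hPs : ∀ (h : G) (r : R) v, P (MonoidAlgebra.single h r * v)
        = MonoidAlgebra.single h r * P v := by
      intro h r v
      simp only [P, Finset.mul_sum]
      refine Fintype.sum_bijective (· * h) (Group.mulRight_bijective h) _ _ fun g => ?_
      have : MonoidAlgebra.single g (1 : R) * (MonoidAlgebra.single h r * v)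
          = r • (MonoidAlgebra.single (g * h) (1 : R) * v) := by
        rw [hsm, ← mul_assoc, ← mul_assoc, MonoidAlgebra.single_mul_single,
          MonoidAlgebra.single_mul_single]
        simp
      rw [this, map_smul, Submodule.coe_smul, hsm, ← mul_assoc, ← mul_assoc,
        MonoidAlgebra.single_mul_single, MonoidAlgebra.single_mul_single]
      simp [c, c_comm]
    let PL : MonoidAlgebra R G →ₗ[MonoidAlgebra R G] I :=
      { toFun := fun v => ⟨P v, hPmem v⟩
        map_add' := fun u v => Subtype.ext (hPadd u v)
        map_smul' := fun a v => by
          apply Subtype.ext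
          change P (a * v) = a * P v
          induction a using MonoidAlgebra.induction_linear with
          | zero => simp [P]
          | add f g hf hg => rw [add_mul, hPadd, hf, hg, add_mul]
          | single g r => exact hPs g r v }
    refine ⟨LinearMap.ker PL, LinearMap.isCompl_of_proj ?_⟩
    rintro ⟨x, hx⟩
    apply Subtype.ext
    change P x = x
    have : ∀ g : G, MonoidAlgebra.single g⁻¹ c *
        (π (MonoidAlgebra.single g 1 * x) : MonoidAlgebra R G) = c • x := by
      intro g
      rw [hπ (MonoidAlgebra.single g 1 * x) (I.smul_mem _ hx), ← mul_assoc, MonoidAlgebra.single_mul_single, hsm]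
      simp
    simp only [P, this, Finset.sum_const, Finset.card_univ]
    rw [← Nat.cast_smul_eq_nsmul R, smul_smul, mul_invOf_self, one_smul]
  exact { exists_isCompl := key }

variable {d : ℕ} {G : Fin d → Type*} [∀ i, Group (G i)]
    [∀ i, Fintype (G i)] [∀ i, DecidableEq (G i)] {R : Type*} [Ring R]
    [∀ i, Invertible (Fintype.card (G i) : R)]

/-- Block row sums. -/
def bsum (A : Matrix ((i : Fin d) × G i) ((i : Fin d) × G i) R) : Matrix (Fin d) (Fin d) R :=
  fun i j => ∑ y : G j, A ⟨i, 1⟩ ⟨j, y⟩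

/-- Diagonal blocks, projected to the augmentation ideal. -/
noncomputable def bdiag (A : Matrix ((i : Fin d) × G i) ((i : Fin d) × G i) R) (i : Fin d) :
    MonoidAlgebra R (G i) :=
  MonoidAlgebra.ofCoeff (Finsupp.equivFunOnFinite.symm
    fun g => A ⟨i, 1⟩ ⟨i, g⟩ - ⅟(Fintype.card (G i) : R) * bsum A i i)

lemma coeff_bdiag (A : Matrix ((i : Fin d) × G i) ((i : Fin d) × G i) R) (i : Fin d) (g : G i) :
    (bdiag A i).coeff g = A ⟨i, 1⟩ ⟨i, g⟩ - ⅟(Fintype.card (G i) : R) * bsum A i i := rfl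

lemma bdiag_aug (A : Matrix ((i : Fin d) × G i) ((i : Fin d) × G i) R) (i : Fin d) :
    aug R (G i) (bdiag A i) = 0 := by
  simp only [aug_eq_sum, coeff_bdiag, Finset.sum_sub_distrib, Finset.sum_const, Finset.card_univ,
    nsmul_eq_mul, mul_invOf_cancel_left]
  simp [bsum]

lemma diag_eq {A : Matrix ((i : Fin d) × G i) ((i : Fin d) × G i) R} (hA : IsJoin A)
    (i : Fin d) (x y : G i) : A ⟨i, x⟩ ⟨i, y⟩ = A ⟨i, 1⟩ ⟨i, x⁻¹ * y⟩ := by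
  have := hA.1 i x 1 (x⁻¹ * y)
  simpa using this

lemma off_eq {A : Matrix ((i : Fin d) × G i) ((i : Fin d) × G i) R} (hA : IsJoin A)
    {i j : Fin d} (h : i ≠ j) (x : G i) (y : G j) :
    A ⟨i, x⟩ ⟨j, y⟩ = ⅟(Fintype.card (G j) : R) * bsum A i j := by
  have : ∀ z : G j, A ⟨i, 1⟩ ⟨j, z⟩ = A ⟨i, x⟩ ⟨j, y⟩ := fun z => hA.2 i j h _ _ _ _
  simp [bsum, this]

lemma rowsum {A : Matrix ((i : Fin d) × G i) ((i : Fin d) × G i) R} (hA : IsJoin A)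
    (i j : Fin d) (x : G i) : ∑ y, A ⟨i, x⟩ ⟨j, y⟩ = bsum A i j := by
  by_cases h : i = j
  · subst h
    simp only [diag_eq hA i x]
    exact Fintype.sum_equiv (Equiv.mulLeft x⁻¹) _ _ (fun _ => rfl)
  · simp [off_eq hA h]

lemma bsum_mul (A : Matrix ((i : Fin d) × G i) ((i : Fin d) × G i) R)
    {B : Matrix ((i : Fin d) × G i) ((i : Fin d) × G i) R} (hB : IsJoin B) :
    bsum (A * B) = bsum A * bsum B := by
  ext i k
  rw [Matrix.mul_apply]
  change ∑ y, (A * B) ⟨i, 1⟩ ⟨k, y⟩ = _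
  simp only [Matrix.mul_apply, Fintype.sum_sigma]
  rw [Finset.sum_comm]
  refine Finset.sum_congr rfl fun j _ => ?_
  rw [Finset.sum_comm]
  simp only [← Finset.mul_sum, rowsum hB]
  rw [← Finset.sum_mul]
  rfl

lemma bdiag_mul {A B : Matrix ((i : Fin d) × G i) ((i : Fin d) × G i) R} (hA : IsJoin A)
    (hB : IsJoin B) (i : Fin d) :
    bdiag (A * B) i = bdiag A i * bdiag B i := by
  ext g
  rw [coeff_bdiag, bsum_mul A hB, coeff_mul_sum]
  simp only [coeff_bdiag, Matrix.mul_apply, Fintype.sum_sigma]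
  rw [Finset.mul_sum, ← Finset.sum_sub_distrib, Finset.sum_eq_single i]
  · have h0 : ∀ x, B ⟨i, 1⟩ ⟨i, x⁻¹ * g⟩ = B ⟨i, x⟩ ⟨i, g⟩ := fun x => (diag_eq hB i x g).symm
    simp only [h0]
    have h1 : ∑ x, B ⟨i, x⟩ ⟨i, g⟩ = bsum B i i := by
      simp only [← h0]
      exact sum_inv_mul (fun h => B ⟨i, 1⟩ ⟨i, h⟩) g
    have h2 : ∑ x, A ⟨i, 1⟩ ⟨i, x⟩ = bsum A i i := rfl
    simp only [sub_mul, mul_sub, Finset.sum_sub_distrib, ← Finset.mul_sum, ← Finset.sum_mul,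
      h1, h2, Finset.sum_const, Finset.card_univ, nsmul_eq_mul]
    have h3 := c_comm (R := R) (Fintype.card (G i)) (bsum A i i)
    rw [← mul_assoc (bsum A i i), ← h3]
    simp only [mul_assoc, invOf_mul_cancel_left]
    abel
  · intro j _ hj
    have h1 : ∀ x, B ⟨j, x⟩ ⟨i, g⟩ = ⅟(Fintype.card (G i) : R) * bsum B j i :=
      fun x => off_eq hB hj x g
    simp only [h1, ← Finset.sum_mul]
    change bsum A i j * _ - _ = 0
    rw [← mul_assoc, ← c_comm, mul_assoc, sub_self]
  · simp

lemma bdiag_add (A B : Matrix ((i : Fin d) × G i) ((i : Fin d) × G i) R) :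
    bdiag (A + B) = bdiag A + bdiag B := by
  funext i
  ext g
  simp only [Pi.add_apply, MonoidAlgebra.coeff_add, Finsupp.add_apply, coeff_bdiag, bsum,
    Matrix.add_apply, Finset.sum_add_distrib, mul_add]
  abel

lemma bsum_add (A B : Matrix ((i : Fin d) × G i) ((i : Fin d) × G i) R) :
    bsum (A + B) = bsum A + bsum B := by
  ext i j
  simp [bsum, Finset.sum_add_distrib]

lemma bsum_one : bsum (1 : Matrix ((i : Fin d) × G i) ((i : Fin d) × G i) R) = 1 := by
  ext i j
  by_cases h : i = j
  · subst h
    simp [bsum, Matrix.one_apply]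
  · simp [bsum, Matrix.one_apply, h]

lemma bdiag_one (i : Fin d) :
    bdiag (1 : Matrix ((i : Fin d) × G i) ((i : Fin d) × G i) R) i = 1 - eGrp R (G i) := by
  ext g
  rw [coeff_bdiag, bsum_one]
  simp [MonoidAlgebra.coeff_sub, coeff_eGrp, MonoidAlgebra.one_def, Matrix.one_apply,
    Finsupp.single_apply]

lemma join_inj {A B : Matrix ((i : Fin d) × G i) ((i : Fin d) × G i) R} (hA : IsJoin A)
    (hB : IsJoin B) (h1 : bsum A = bsum B) (h2 : bdiag A = bdiag B) : A = B := by
  ext ⟨i, x⟩ ⟨j, y⟩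
  by_cases h : i = j
  · subst h
    rw [diag_eq hA, diag_eq hB]
    have := congrArg (fun p => (p i).coeff (x⁻¹ * y)) h2
    simpa [coeff_bdiag, h1] using this
  · rw [off_eq hA h, off_eq hB h, h1]

/-- The inverse construction. -/
noncomputable def mkJoin (C : Matrix (Fin d) (Fin d) R) (p : (i : Fin d) → MonoidAlgebra R (G i)) :
    Matrix ((i : Fin d) × G i) ((i : Fin d) × G i) R :=
  fun a b => ⅟(Fintype.card (G b.1) : R) * C a.1 b.1 +
    if h : b.1 = a.1 then (p a.1).coeff (a.2⁻¹ * (h ▸ b.2)) else 0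

lemma mkJoin_same (C : Matrix (Fin d) (Fin d) R) (p : (i : Fin d) → MonoidAlgebra R (G i))
    (i : Fin d) (x y : G i) : mkJoin C p ⟨i, x⟩ ⟨i, y⟩ =
      ⅟(Fintype.card (G i) : R) * C i i + (p i).coeff (x⁻¹ * y) := by
  simp [mkJoin]

lemma mkJoin_off (C : Matrix (Fin d) (Fin d) R) (p : (i : Fin d) → MonoidAlgebra R (G i))
    {i j : Fin d} (h : i ≠ j) (x : G i) (y : G j) : mkJoin C p ⟨i, x⟩ ⟨j, y⟩ =
      ⅟(Fintype.card (G j) : R) * C i j := by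
  simp [mkJoin, h.symm]

lemma mkJoin_isJoin (C : Matrix (Fin d) (Fin d) R) (p : (i : Fin d) → MonoidAlgebra R (G i)) :
    IsJoin (mkJoin C p) := by
  refine ⟨fun i g x y => ?_, fun i j h x x' y y' => ?_⟩
  · rw [mkJoin_same, mkJoin_same]
    congr 2
    group
  · rw [mkJoin_off C p h, mkJoin_off C p h]

lemma bsum_mkJoin (C : Matrix (Fin d) (Fin d) R) (p : (i : Fin d) → MonoidAlgebra R (G i))
    (hp : ∀ i, aug R (G i) (p i) = 0) : bsum (mkJoin C p) = C := by
  ext i j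
  by_cases h : i = j
  · subst h
    have := hp i
    rw [aug_eq_sum] at this
    simp [bsum, mkJoin_same, Finset.sum_add_distrib, this]
  · simp [bsum, mkJoin_off C p h]

lemma bdiag_mkJoin (C : Matrix (Fin d) (Fin d) R) (p : (i : Fin d) → MonoidAlgebra R (G i))
    (hp : ∀ i, aug R (G i) (p i) = 0) : bdiag (mkJoin C p) = p := by
  funext i
  ext g
  rw [coeff_bdiag, bsum_mkJoin C p hp, mkJoin_same]
  simp

lemma semisimple_transfer {A T : Type*} [Ring A] [Ring T] (D : NonUnitalSubring T)
    (φ : A ≃ D) (hmul : ∀ a b : A, φ (a * b) = φ a * φ b)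
    (hadd : ∀ a b : A, φ (a + b) = φ a + φ b) (u : T) (hu : u ∈ D) (hone : φ 1 = ⟨u, hu⟩)
    (hmem : ∀ t, t * u ∈ D) (hid : ∀ t ∈ D, t * u = t) (hc : ∀ t, u * t = t * u)
    (hT : IsSemisimpleRing T) : IsSemisimpleRing A := by
  let pr : T → D := fun t => ⟨t * u, hmem t⟩
  have pradd : ∀ a b, pr (a + b) = pr a + pr b := fun a b => Subtype.ext (add_mul _ _ _)
  have prmul : ∀ a b, pr (a * b) = pr a * pr b := fun a b => Subtype.ext <| by
    change a * b * u = a * u * (b * u)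
    rw [mul_assoc a u, ← mul_assoc u, hc b, mul_assoc b, hid u hu, mul_assoc]
  let f : T →+* A :=
    { toFun := fun q => φ.symm (pr q)
      map_one' := by
        rw [Equiv.symm_apply_eq, hone]
        exact Subtype.ext (one_mul _)
      map_zero' := by
        have h := pradd 0 0
        rw [add_zero, left_eq_add] at h
        have h' := hadd 0 0
        rw [add_zero, left_eq_add] at h'
        rw [Equiv.symm_apply_eq, h, h']
      map_add' := fun a b => by
        rw [Equiv.symm_apply_eq, hadd, pradd, Equiv.apply_symm_apply, Equiv.apply_symm_apply]
      map_mul' := fun a b => by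
        rw [Equiv.symm_apply_eq, hmul, prmul, Equiv.apply_symm_apply, Equiv.apply_symm_apply] }
  refine RingHom.isSemisimpleRing_of_surjective f fun s => ⟨(φ s).1, ?_⟩
  change φ.symm (pr (φ s).1) = s
  rw [Equiv.symm_apply_eq]
  exact Subtype.ext (hid _ (φ s).2)

/-- The forward map into the ambient product. -/
noncomputable def fwd (A : Matrix ((i : Fin d) × G i) ((i : Fin d) × G i) R) :
    Matrix (Fin d) (Fin d) R × ((i : Fin d) → MonoidAlgebra R (G i)) := (bsum A, bdiag A)

lemma fwd_mem (A : Matrix ((i : Fin d) × G i) ((i : Fin d) × G i) R) :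
    fwd A ∈ targetΔ G R := fun i => bdiag_aug A i

lemma fwd_mul {A B : Matrix ((i : Fin d) × G i) ((i : Fin d) × G i) R} (hA : IsJoin A)
    (hB : IsJoin B) : fwd (A * B) = fwd A * fwd B := by
  simp only [fwd, Prod.mk_mul_mk, bsum_mul A hB]
  congr 1
  funext i
  rw [bdiag_mul hA hB, Pi.mul_apply]

lemma fwd_add (A B : Matrix ((i : Fin d) × G i) ((i : Fin d) × G i) R) :
    fwd (A + B) = fwd A + fwd B := by
  simp only [fwd, Prod.mk_add_mk, bsum_add, bdiag_add]

lemma fwd_one : fwd (1 : Matrix ((i : Fin d) × G i) ((i : Fin d) × G i) R) =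
    (1, fun i => 1 - eGrp R (G i)) := by
  simp only [fwd, bsum_one]
  congr 1
  funext i
  rw [bdiag_one]

lemma fwd_mkJoin (q : Matrix (Fin d) (Fin d) R × ((i : Fin d) → MonoidAlgebra R (G i)))
    (hq : q ∈ targetΔ G R) : fwd (mkJoin q.1 q.2) = q := by
  simp only [fwd, bsum_mkJoin _ _ hq, bdiag_mkJoin _ _ hq]

lemma fwd_inj {A B : Matrix ((i : Fin d) × G i) ((i : Fin d) × G i) R} (hA : IsJoin A)
    (hB : IsJoin B) (h : fwd A = fwd B) : A = B :=
  join_inj hA hB (congrArg Prod.fst h) (congrArg Prod.snd h)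

lemma unit_mem (q : Matrix (Fin d) (Fin d) R × ((i : Fin d) → MonoidAlgebra R (G i))) :
    q * (1, fun i => 1 - eGrp R (G i)) ∈ targetΔ G R := by
  intro i
  simp [aug_eGrp]

lemma unit_id (q : Matrix (Fin d) (Fin d) R × ((i : Fin d) → MonoidAlgebra R (G i)))
    (hq : q ∈ targetΔ G R) : q * (1, fun i => 1 - eGrp R (G i)) = q := by
  obtain ⟨C, p⟩ := q
  rw [Prod.mk_mul_mk, mul_one]
  congr 1
  funext i
  rw [Pi.mul_apply, mul_sub, mul_one, mul_eGrp_of_aug _ (hq i), sub_zero]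

lemma unit_comm (q : Matrix (Fin d) (Fin d) R × ((i : Fin d) → MonoidAlgebra R (G i))) :
    (1, fun i => 1 - eGrp R (G i)) * q = q * (1, fun i => 1 - eGrp R (G i)) := by
  obtain ⟨C, p⟩ := q
  rw [Prod.mk_mul_mk, Prod.mk_mul_mk, mul_one, one_mul]
  congr 1
  funext i
  rw [Pi.mul_apply, Pi.mul_apply, sub_mul, mul_sub, eGrp_mul_comm, one_mul, mul_one]

lemma ambient_semisimple (hR : IsSemisimpleRing R) :
    IsSemisimpleRing (Matrix (Fin d) (Fin d) R × ((i : Fin d) → MonoidAlgebra R (G i))) := by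
  have : ∀ i, IsSemisimpleRing (MonoidAlgebra R (G i)) := fun i => maschke
  infer_instance

/-- Generic assembly of the isomorphism. -/
lemma assemble {M T : Type*} [Ring M] [Ring T] (S : Subring M) (D : NonUnitalSubring T)
    (F : M → T) (K : T → M) (hF : ∀ A, F A ∈ D) (hK : ∀ q ∈ D, K q ∈ S)
    (hFK : ∀ q ∈ D, F (K q) = q) (hinj : ∀ A ∈ S, ∀ B ∈ S, F A = F B → A = B)
    (hmul : ∀ A ∈ S, ∀ B ∈ S, F (A * B) = F A * F B) (hadd : ∀ A B, F (A + B) = F A + F B)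
    (u : T) (hu : u ∈ D) (hone : F 1 = u) :
    ∃ φ : S ≃ D, (∀ a b : S, φ (a * b) = φ a * φ b) ∧ (∀ a b : S, φ (a + b) = φ a + φ b) ∧
      φ 1 = ⟨u, hu⟩ :=
  ⟨{  toFun := fun A => ⟨F A.1, hF A.1⟩
      invFun := fun q => ⟨K q.1, hK q.1 q.2⟩
      left_inv := fun A => Subtype.ext
        (hinj _ (hK _ (hF A.1)) _ A.2 (hFK _ (hF A.1)))
      right_inv := fun q => Subtype.ext (hFK q.1 q.2) },
    fun a b => Subtype.ext (hmul a.1 a.2 b.1 b.2), fun a b => Subtype.ext (hadd a.1 b.1),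
    Subtype.ext hone⟩

end JoinHelpers

/-- If each `|G_i|` is invertible in `R`, the join ring `J_{G_1,...,G_d}(R)`
is isomorphic, as a ring, to `M_d(R) × Π_i Δ_R(G_i)` (where the augmentation
ideal `Δ_R(G_i)` is a ring with identity `1 - e_{G_i}`). Consequently, if `R`
is semisimple then so is the join ring. -/
theorem join_decomposition {d : ℕ} (G : Fin d → Type*) [∀ i, Group (G i)]
    [∀ i, Fintype (G i)] [∀ i, DecidableEq (G i)] (R : Type*) [Ring R]
    [∀ i, Invertible (Fintype.card (G i) : R)]
    (S : Subring (Matrix ((i : Fin d) × G i) ((i : Fin d) × G i) R))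
    (hS : (S : Set (Matrix ((i : Fin d) × G i) ((i : Fin d) × G i) R)) =
      {A | IsJoin A}) :
    (∃ φ : S ≃ targetΔ G R,
      (∀ a b : S, φ (a * b) = φ a * φ b) ∧
      (∀ a b : S, φ (a + b) = φ a + φ b) ∧
      φ 1 = ⟨(1, fun i => 1 - eGrp R (G i)), one_sub_eGrp_mem G R⟩) ∧
    (IsSemisimpleRing R → IsSemisimpleRing S) := by
  have hmem : ∀ A, A ∈ S ↔ IsJoin A := fun A => by
    rw [← SetLike.mem_coe, hS]; rfl
  have main := assemble S (targetΔ G R) fwd (fun q => mkJoin q.1 q.2) fwd_mem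
    (fun q _ => (hmem _).2 (mkJoin_isJoin _ _)) fwd_mkJoin
    (fun A hA B hB => fwd_inj ((hmem A).1 hA) ((hmem B).1 hB))
    (fun A hA B hB => fwd_mul ((hmem A).1 hA) ((hmem B).1 hB)) fwd_add
    (1, fun i => 1 - eGrp R (G i)) (one_sub_eGrp_mem G R) fwd_one
  refine ⟨main, fun hR => ?_⟩
  obtain ⟨φ, hmul, hadd, hone⟩ := main
  exact semisimple_transfer (targetΔ G R) φ hmul hadd _ (one_sub_eGrp_mem G R) hone
    unit_mem unit_id unit_comm (ambient_semisimple hR)
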